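/- For every (f,T) ∈ 𝓒^1 × 𝓔^1, the set K(f,T) is a nonempty compact subset of ℝ/ℤ and T(K(f,T)) = K(f,T). -/

import Mathlib

/-!
The circle map `T` induced by an expanding lift `F` contracts along inverse branches: any orbit
segment of length `n` is shadowed by one with prescribed endpoint, exponentially closely backwards
in time (`backContr_cmap`, by solving `Fⁿ(a') = x'` on the line, where `F` is onto). Since `f` is
Lipschitz, Birkhoff sums along the two segments differ by at most a constant, independent of `n`,
times the distance of the endpoints.

*Nonemptiness.* Let `uₙ(x) = max_{Tⁿ y = x} Sₙ f(y)`. These functions are equi-Lipschitz, so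
`n ↦ uₙ(p)` is quasi-additive, and Fekete's lemma yields `b` with `uₙ - n b` uniformly bounded.
The limsup of `uₙ - n b` is a Lipschitz function `g` that is calibrated with constant `b`
(`exists_calibrated`). Integrating the sub-action inequality gives `∫ f dμ ≤ b` for invariant `μ`,
and an empirical limit measure along an orbit in the equality set attains `b`; hence
`b = β(f,T)` (`beta_eq`) and `g ∈ G_{f,T}`. The set `Λ_{f,T,g}` is then nonempty because it is a
nested intersection of nonempty compact sets (`lambda_nonempty`).

*Invariance.* Each `Λ_{f,T,g}` is the core of a forward invariant compact set, hence strictly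
invariant (`core_image`), and so is their union.

*Compactness.* All elements of `G_{f,T}` share one Lipschitz constant (`calibrated_lipschitz`), so
after normalising `g 0 = 0` they form a compact set in the sup norm (`isCompact_normalised`). The
relation `x ∈ Λ_{f,T,g}` is closed in `(g, x)` (`isClosed_graph`), being built from closed
conditions by projection along compact factors, and `K(f,T)` is the projection of a compact set.
-/

open MeasureTheory Topology Filter Set
open scoped UniformConvergence

noncomputable section

/-- The circle `ℝ/ℤ`. -/
abbrev Circle1 : Type := AddCircle (1 : ℝ)

/-- The canonical representative in `[0,1)` of a point of `ℝ/ℤ`. -/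
noncomputable def rep (z : Circle1) : ℝ := (AddCircle.equivIco 1 0 z : ℝ)

/-- The circle map induced by a lift `F : ℝ → ℝ`. -/
noncomputable def cmap (F : ℝ → ℝ) : Circle1 → Circle1 := fun z => ((F (rep z) : ℝ) : Circle1)

/-- The data determining the `C^r` topology: all derivatives of order `≤ r`, viewed in the
space of functions `ℝ → ℝ` with the uniform-convergence topology. -/
noncomputable def crSeq (r : ℕ∞) (f : ℝ → ℝ) : ℕ → (ℝ →ᵤ ℝ) :=
  fun k => UniformFun.ofFun (if (k : ℕ∞) ≤ r then iteratedDeriv k f else 0)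

/-- The space `𝓒^r` of `C^r` functions `ℝ/ℤ → ℝ`. -/
def CrFun (r : ℕ∞) : Type := {f : Circle1 → ℝ // ContDiff ℝ r fun x : ℝ => f ↑x}

/-- The `C^r` topology on `𝓒^r`. -/
noncomputable instance (r : ℕ∞) : TopologicalSpace (CrFun r) :=
  TopologicalSpace.induced (fun f : CrFun r => crSeq r fun x : ℝ => f.1 ↑x) inferInstance

/-- `F : ℝ → ℝ` is a lift of a `C^r` expanding circle map: it is `C^r`, sends `x+1` to
`F x + d` for a fixed integer `d`, and `|(Fⁿ)'| ≥ C λⁿ` for some `C > 0`, `λ > 1`. -/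
def ExpandingLift (r : ℕ∞) (F : ℝ → ℝ) : Prop :=
  ContDiff ℝ r F ∧ (∃ d : ℤ, ∀ x : ℝ, F (x + 1) = F x + d) ∧
    ∃ C > (0 : ℝ), ∃ l > (1 : ℝ), ∀ n : ℕ, 1 ≤ n → ∀ x : ℝ, C * l ^ n ≤ |deriv (F^[n]) x|

/-- The space `𝓔^r` of (lifts of) `C^r` expanding circle maps, with the `C^r` topology. -/
def ExpMap (r : ℕ∞) : Type := {F : ℝ → ℝ // ExpandingLift r F}

noncomputable instance (r : ℕ∞) : TopologicalSpace (ExpMap r) :=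
  TopologicalSpace.induced (fun F : ExpMap r => crSeq r F.1) inferInstance

/-- `μ` is a `T`-invariant Borel probability measure. -/
def InvProb (T : Circle1 → Circle1) (μ : Measure Circle1) : Prop :=
  IsProbabilityMeasure μ ∧ μ.map T = μ

/-- `β(f,T)`, the maximal ergodic average. -/
noncomputable def beta (f : Circle1 → ℝ) (T : Circle1 → Circle1) : ℝ :=
  sSup ((fun μ : Measure Circle1 => ∫ x, f x ∂μ) '' {μ | InvProb T μ})

/-- `μ` is a maximizing measure for `(f,T)`. -/
def IsMaximizing (f : Circle1 → ℝ) (T : Circle1 → Circle1) (μ : Measure Circle1) : Prop :=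
  InvProb T μ ∧ ∫ x, f x ∂μ = beta f T

/-- `μ` is a periodic measure: an invariant measure supported on a periodic orbit. -/
def IsPeriodicMeasure (T : Circle1 → Circle1) (μ : Measure Circle1) : Prop :=
  InvProb T μ ∧ ∃ x : Circle1, ∃ n : ℕ, 0 < n ∧ T^[n] x = x ∧
    μ (Set.range fun k : ℕ => T^[k] x) = 1

/-- `(f,T)` is uniquely maximized by a periodic measure. -/
def UniqMaxPeriodic (f : Circle1 → ℝ) (T : Circle1 → Circle1) : Prop :=
  ∃ μ : Measure Circle1, IsMaximizing f T μ ∧ IsPeriodicMeasure T μ ∧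
    ∀ ν : Measure Circle1, IsMaximizing f T ν → ν = μ

/-- A (continuous) sub-action for `(f,T)`. -/
def IsSubaction (f : Circle1 → ℝ) (T : Circle1 → Circle1) (g : Circle1 → ℝ) : Prop :=
  Continuous g ∧ ∀ x, g x + f x ≤ g (T x) + beta f T

/-- A calibrated sub-action for `(f,T)`. -/
def IsCalibrated (f : Circle1 → ℝ) (T : Circle1 → Circle1) (g : Circle1 → ℝ) : Prop :=
  IsSubaction f T g ∧ ∀ x, ∃ y, T y = x ∧ g y + f y = g x + beta f T

/-- `G_{f,T}`: the set of Lipschitz calibrated sub-actions of `(f,T)`. -/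
def Gset (f : Circle1 → ℝ) (T : Circle1 → Circle1) : Set (Circle1 → ℝ) :=
  {g | (∃ K : NNReal, LipschitzWith K g) ∧ IsCalibrated f T g}

/-- The set `E_{f,T,g}`. -/
def Eset (f : Circle1 → ℝ) (T : Circle1 → Circle1) (g : Circle1 → ℝ) : Set Circle1 :=
  {x | g x + f x = g (T x) + beta f T}

/-- The set `Λ*_{f,T,g}`. -/
def LambdaStar (f : Circle1 → ℝ) (T : Circle1 → Circle1) (g : Circle1 → ℝ) : Set Circle1 :=
  {x | ∀ n : ℕ, T^[n] x ∈ Eset f T g}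

/-- The set `Λ_{f,T,g}`. -/
def Lambda (f : Circle1 → ℝ) (T : Circle1 → Circle1) (g : Circle1 → ℝ) : Set Circle1 :=
  ⋂ n : ℕ, T^[n] '' LambdaStar f T g

/-- The set `K(f,T)`. -/
def Kset (f : Circle1 → ℝ) (T : Circle1 → Circle1) : Set Circle1 :=
  ⋃ g ∈ Gset f T, Lambda f T g

/-- The `(f,T)`-non-wandering set `Ω(f,T)`. -/
def OmegaSet (f : Circle1 → ℝ) (T : Circle1 → Circle1) : Set Circle1 :=
  {x | ∀ ε > (0 : ℝ), ∃ n : ℕ, 1 ≤ n ∧ ∃ z : Circle1, T^[n] z = x ∧ dist z x < ε ∧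
    |∑ i ∈ Finset.range n, (f (T^[i] z) - beta f T)| < ε}

/-- `A` is a periodic orbit of `T`. -/
def IsPeriodicOrbit (T : Circle1 → Circle1) (A : Set Circle1) : Prop :=
  ∃ x : Circle1, (∃ n : ℕ, 0 < n ∧ T^[n] x = x) ∧ A = Set.range fun k : ℕ => T^[k] x

/-- `A` is a `T`-minimal set: a nonempty compact invariant set with no proper nonempty
compact invariant subset. -/
def IsMinimalSet (T : Circle1 → Circle1) (A : Set Circle1) : Prop :=
  A.Nonempty ∧ IsCompact A ∧ T '' A ⊆ A ∧
    ∀ B ⊆ A, B.Nonempty → IsCompact B → T '' B ⊆ B → B = A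

/-- The space of `C^r` families of functions on the circle with `q` parameters,
i.e. maps `(t,x) ↦ f_t(x)` that are jointly `C^r` (the circle variable via a lift). -/
def FamFun (r : ℕ∞) (q : ℕ) : Type :=
  {G : ((Fin q → ℝ) × ℝ) → ℝ // ContDiff ℝ r G ∧ ∀ t x, G (t, x + 1) = G (t, x)}

noncomputable def famSeq (r : ℕ∞) (q : ℕ) (G : ((Fin q → ℝ) × ℝ) → ℝ) :
    (k : ℕ) → (((Fin q → ℝ) × ℝ) →ᵤ (((Fin q → ℝ) × ℝ) [×k]→L[ℝ] ℝ)) :=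
  fun k => UniformFun.ofFun (if (k : ℕ∞) ≤ r then iteratedFDeriv ℝ k G else 0)

/-- The `C^r` topology on the space of `C^r` families. -/
noncomputable instance (r : ℕ∞) (q : ℕ) : TopologicalSpace (FamFun r q) :=
  TopologicalSpace.induced (fun G : FamFun r q => famSeq r q G.1) inferInstance

/-- The member `f_t : ℝ/ℤ → ℝ` of a family, at the parameter `t`. -/
noncomputable def famMem {r : ℕ∞} {q : ℕ} (G : FamFun r q) (t : Fin q → ℝ) : Circle1 → ℝ :=
  fun z => G.1 (t, rep z)

/-- The product `m_∞` over `ℕ` of Lebesgue measure on `[0,1]`, realised as the pushforward of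
the Haar probability measure of the compact group `(ℝ/ℤ)^ℕ` under the coordinatewise choice of
representatives in `[0,1)`. -/
noncomputable def mInfty : Measure (ℕ → ℝ) :=
  Measure.map (fun (t : ℕ → Circle1) (n : ℕ) => rep (t n))
    (MeasureTheory.Measure.addHaarMeasure (⊤ : TopologicalSpace.PositiveCompacts (ℕ → Circle1)))

/-- `S` is an `N`-dimensionally shy subset of a normed real vector space `V`. -/
def NDimShy {V : Type*} [NormedAddCommGroup V] [NormedSpace ℝ V] (N : ℕ) (S : Set V) : Prop :=
  ∃ φ : Fin N → V, ∀ f : V,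
    volume {t : Fin N → ℝ | (∀ i, t i ∈ Set.Icc (0 : ℝ) 1) ∧ f + ∑ i, t i • φ i ∈ S} = 0

/-- `S` is a finite dimensionally shy subset of a normed real vector space `V`. -/
def FinDimShy {V : Type*} [NormedAddCommGroup V] [NormedSpace ℝ V] (S : Set V) : Prop :=
  ∃ N : ℕ, 0 < N ∧ NDimShy N S

/-- `S` is a shy subset of `V`: there are a compactly supported Borel probability measure `μ`
on `V` and a Borel set `S̃ ⊇ S` all of whose translates are `μ`-null. -/
def IsShy {V : Type*} [NormedAddCommGroup V] [NormedSpace ℝ V] (S : Set V) : Prop :=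
  letI : MeasurableSpace V := borel V
  ∃ μ : Measure V, μ Set.univ = 1 ∧ (∃ K : Set V, IsCompact K ∧ μ K = 1) ∧
    ∃ St : Set V, MeasurableSet St ∧ S ⊆ St ∧
      ∀ v : V, μ ((fun x => x + v) ⁻¹' St) = 0

/-- `S` is a prevalent subset of `V`. -/
def IsPrevalent {V : Type*} [NormedAddCommGroup V] [NormedSpace ℝ V] (S : Set V) : Prop :=
  IsShy Sᶜ

/-- `F` is the (normalized) lift of an orientation-preserving real analytic expanding circle
map of degree `d` fixing `π(0)`. -/
def AnalyticExpandingLift (F : ℝ → ℝ) (d : ℕ) : Prop :=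
  (∀ x : ℝ, AnalyticAt ℝ F x) ∧ (∀ x : ℝ, F (x + 1) = F x + d) ∧ StrictMono F ∧ F 0 = 0 ∧
    2 ≤ d ∧ ∃ C > (0 : ℝ), ∃ l > (1 : ℝ), ∀ n : ℕ, 1 ≤ n → ∀ x : ℝ, C * l ^ n ≤ |deriv (F^[n]) x|

/-- The inverse branches `τ_{i,n} = τ_{i_n} ∘ ⋯ ∘ τ_{i_1}`, where `τ = F⁻¹` and
`τ_i(x) = τ(x+i)`; the word `i` is indexed from `0`, so `i 0` is the first letter `i_1`. -/
noncomputable def tauIter (F : ℝ → ℝ) {d : ℕ} (i : ℕ → Fin d) : ℕ → ℝ → ℝ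
  | 0, x => x
  | n + 1, x => Function.invFun F (tauIter F i n x + ((i n : ℕ) : ℝ))

/-- The function `h^f_i` associated to an infinite word `i`. -/
noncomputable def hSum (F : ℝ → ℝ) {d : ℕ} (i : ℕ → Fin d) (f : Circle1 → ℝ) : ℝ → ℝ :=
  fun x => ∑' n : ℕ,
    (f ((tauIter F i (n + 1) x : ℝ) : Circle1) - f ((tauIter F i (n + 1) 0 : ℝ) : Circle1))

/-- The function `h^f_i` associated to a finite word of length `m` (the first `m` letters
of `i`). -/
noncomputable def hSumFin (F : ℝ → ℝ) {d : ℕ} (i : ℕ → Fin d) (m : ℕ) (f : Circle1 → ℝ) :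
    ℝ → ℝ :=
  fun x => ∑ n ∈ Finset.range m,
    (f ((tauIter F i (n + 1) x : ℝ) : Circle1) - f ((tauIter F i (n + 1) 0 : ℝ) : Circle1))

/-- `i ∈ CL(x,K)`: all backward images of `x` along the word `i` lie over `K`. -/
def WordIn (F : ℝ → ℝ) {d : ℕ} (i : ℕ → Fin d) (x : ℝ) (K : Set Circle1) : Prop :=
  ∀ n : ℕ, 1 ≤ n → ((tauIter F i n x : ℝ) : Circle1) ∈ K

/-- `x` (a real, lying over `K`) is an `f`-supercritical value of `K`. -/
def IsSupercriticalValue (F : ℝ → ℝ) (d : ℕ) (f : Circle1 → ℝ) (K : Set Circle1) (x : ℝ) :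
    Prop :=
  ((x : ℝ) : Circle1) ∈ K ∧ ∃ i j : ℕ → Fin d, WordIn F i x K ∧ WordIn F j x K ∧ i 0 ≠ j 0 ∧
    deriv (hSum F i f) x = deriv (hSum F j f) x

/-- `x` is a critical value of `T|K`. -/
def IsCriticalValue (T : Circle1 → Circle1) (K : Set Circle1) (x : Circle1) : Prop :=
  x ∈ K ∧ ∃ y z, y ∈ K ∧ z ∈ K ∧ y ≠ z ∧ T y = x ∧ T z = x

/-- A critical value `x` of `T|K` is regular: on each side of `x` there is a continuous
inverse branch of `T` selecting the unique preimage in `K`. -/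
def IsRegularCriticalValue (T : Circle1 → Circle1) (K : Set Circle1) (x : Circle1) : Prop :=
  ∃ U : Set Circle1, U ∈ 𝓝 x ∧ IsConnected U ∧
    ∀ b ∈ U \ {x}, ∃ s : Circle1 → Circle1,
      ContinuousOn s (connectedComponentIn (U \ {x}) b) ∧
      (∀ y ∈ connectedComponentIn (U \ {x}) b, T (s y) = y) ∧
      (∀ y ∈ K ∩ connectedComponentIn (U \ {x}) b, T ⁻¹' {y} ∩ K = {s y})

/-- `T|K` is Sturmian-like: every critical value is regular. -/
def SturmianLike (T : Circle1 → Circle1) (K : Set Circle1) : Prop :=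
  ∀ x, IsCriticalValue T K x → IsRegularCriticalValue T K x

/-- `f : ℝ/ℤ → ℝ` is a trigonometric polynomial. -/
def IsTrigPoly (f : Circle1 → ℝ) : Prop :=
  ∃ m : ℕ, ∃ a b : ℕ → ℝ, ∀ x : ℝ,
    f ↑x = a 0 + ∑ k ∈ Finset.range m,
      (a (k + 1) * Real.cos (2 * Real.pi * (k + 1) * x) +
        b (k + 1) * Real.sin (2 * Real.pi * (k + 1) * x))

end

/-! ### The circle map and its inverse branches -/

/-- Uniform contraction along inverse branches: every orbit segment `y, T y, …, Tⁿ y` is shadowed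
by a segment ending at any prescribed `x'`, with distance at most `M θⁿ⁻ⁱ d(Tⁿ y, x')` at
time `i`. -/
def BackContr {X : Type*} [PseudoMetricSpace X] (T : X → X) (M θ : ℝ) : Prop :=
  ∀ (n : ℕ) (x' y : X), ∃ y', T^[n] y' = x' ∧
    ∀ i ≤ n, dist (T^[i] y) (T^[i] y') ≤ M * θ ^ (n - i) * dist (T^[n] y) x'

lemma lift_add_int {F : ℝ → ℝ} {d : ℤ} (hd : ∀ x : ℝ, F (x + 1) = F x + d) (x : ℝ) (m : ℤ) :
    F (x + m) = F x + m * d := by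
  induction m using Int.induction_on with
  | zero => simp
  | succ k ih =>
    push_cast at ih ⊢
    rw [← add_assoc, hd, ih]; ring
  | pred k ih =>
    push_cast at ih ⊢
    have h := hd (x + (-(k : ℝ) - 1))
    rw [show x + (-(k : ℝ) - 1) + 1 = x + -(k : ℝ) by ring, ih] at h
    linarith

lemma exists_int_of_coe_eq {a b : ℝ} (h : (a : Circle1) = b) : ∃ m : ℤ, a = b + m := by
  rw [← sub_eq_zero, ← AddCircle.coe_sub, AddCircle.coe_eq_zero_iff] at h
  obtain ⟨m, hm⟩ := h
  exact ⟨m, by simp at hm; linarith⟩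

lemma coe_add_int (a : ℝ) (m : ℤ) : ((a + m : ℝ) : Circle1) = a := by
  rw [← sub_eq_zero, ← AddCircle.coe_sub, AddCircle.coe_eq_zero_iff]
  exact ⟨m, by simp⟩

lemma cmap_coe {F : ℝ → ℝ} {d : ℤ} (hd : ∀ x : ℝ, F (x + 1) = F x + d) (a : ℝ) :
    cmap F (a : Circle1) = ((F a : ℝ) : Circle1) := by
  have h : ((rep (a : Circle1) : ℝ) : Circle1) = a := AddCircle.coe_equivIco
  obtain ⟨m, hm⟩ := exists_int_of_coe_eq h
  rw [cmap, hm, lift_add_int hd, ← Int.cast_mul, coe_add_int]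

lemma exists_dist_eq_lift (x : ℝ) (z : Circle1) :
    ∃ w : ℝ, (w : Circle1) = z ∧ dist (x : Circle1) z = |x - w| := by
  obtain ⟨v, rfl⟩ := QuotientAddGroup.mk_surjective z
  refine ⟨v + round (x - v), coe_add_int _ _, ?_⟩
  rw [dist_eq_norm]
  change ‖((x - v : ℝ) : UnitAddCircle)‖ = _
  rw [UnitAddCircle.norm_eq, sub_sub]

lemma dist_coe_le (x y : ℝ) : dist (x : Circle1) (y : Circle1) ≤ |x - y| := by
  rw [dist_eq_norm]
  change ‖((x - y : ℝ) : UnitAddCircle)‖ ≤ _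
  rw [UnitAddCircle.norm_eq]
  simpa using round_le (x - y) 0


lemma iterate_cmap_coe {F : ℝ → ℝ} {d : ℤ} (hd : ∀ x : ℝ, F (x + 1) = F x + d) (n : ℕ) (a : ℝ) :
    (cmap F)^[n] (a : Circle1) = ((F^[n] a : ℝ) : Circle1) := by
  induction n generalizing a with
  | zero => rfl
  | succ n ih => rw [Function.iterate_succ_apply, Function.iterate_succ_apply, cmap_coe hd, ih]

lemma continuous_cmap {F : ℝ → ℝ} {d : ℤ} (hF : Continuous F)
    (hd : ∀ x : ℝ, F (x + 1) = F x + d) : Continuous (cmap F) := by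
  refine (QuotientAddGroup.isQuotientMap_mk (AddSubgroup.zmultiples (1 : ℝ))).continuous_iff.2 ?_
  have h : cmap F ∘ (QuotientAddGroup.mk : ℝ → Circle1) = fun a : ℝ => ((F a : ℝ) : Circle1) :=
    funext (cmap_coe hd)
  change Continuous (cmap F ∘ (QuotientAddGroup.mk : ℝ → Circle1))
  rw [h]
  exact (AddCircle.continuous_mk' 1).comp hF

lemma lift_expands {G : ℝ → ℝ} (hG : Differentiable ℝ G) {c : ℝ} (h : ∀ x, c ≤ |deriv G x|)
    (x y : ℝ) : c * |x - y| ≤ |G x - G y| := by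
  wlog hxy : y ≤ x generalizing x y
  · rw [abs_sub_comm x, abs_sub_comm (G x)]
    exact this y x (le_of_not_ge hxy)
  rcases hxy.eq_or_lt with rfl | hlt
  · simp
  obtain ⟨z, -, hz⟩ := exists_deriv_eq_slope G hlt hG.continuous.continuousOn
    hG.differentiableOn
  have h1 := h z
  rw [hz, abs_div, le_div_iff₀ (abs_pos.2 (sub_ne_zero.2 hlt.ne'))] at h1
  exact h1

lemma lift_surjective {F : ℝ → ℝ} {d : ℤ} (hF : Continuous F) (hd0 : d ≠ 0)
    (hd : ∀ x : ℝ, F (x + 1) = F x + d) : Function.Surjective F := by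
  intro t
  have hd1 : (1 : ℝ) ≤ (d : ℝ) ^ 2 := by
    have : 0 < d ^ 2 := by positivity
    exact_mod_cast this
  -- `F (± k d) = F 0 ± k d²`, so for large `k` these two values enclose `t` whatever the sign
  -- of `d`.
  obtain ⟨k, hk⟩ := exists_nat_gt |t - F 0|
  have hk' := abs_lt.1 hk
  have h1 := lift_add_int hd 0 (k * d)
  have h2 := lift_add_int hd 0 (-(k * d))
  push_cast at h1 h2
  have hk0 : (0 : ℝ) ≤ k := k.cast_nonneg
  exact mem_range_of_exists_le_of_exists_ge hF
    ⟨_, by rw [h2]; nlinarith⟩ ⟨_, by rw [h1]; nlinarith⟩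

/-- An expanding circle map contracts distances at a uniform exponential rate along inverse
branches: the branch is obtained by solving `Fⁿ(a') = x'` on the universal cover. -/
lemma backContr_cmap {F : ℝ → ℝ} (hF : ExpandingLift 1 F) :
    Continuous (cmap F) ∧ Function.Surjective (cmap F) ∧
      ∃ M > 0, ∃ θ > 0, θ < 1 ∧ BackContr (cmap F) M θ := by
  obtain ⟨hC, ⟨d, hd⟩, C, hC0, l, hl, hexp⟩ := hF
  have hdiff : Differentiable ℝ F := hC.differentiable (by simp)
  have hdiffn (n : ℕ) : Differentiable ℝ (F^[n]) := hdiff.iterate n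
  have hd0 : d ≠ 0 := by
    rintro rfl
    have h1 := lift_expands hdiff (fun x => by simpa using hexp 1 le_rfl x) 1 0
    have h2 := hd 0
    simp at h1 h2
    rw [h2] at h1
    have : 0 < C * l := by positivity
    simp at h1
    linarith
  have hsurj := lift_surjective hdiff.continuous hd0 hd
  refine ⟨continuous_cmap hdiff.continuous hd, ?_, max C⁻¹ 1, by positivity, l⁻¹, by positivity,
    inv_lt_one_of_one_lt₀ hl, ?_⟩
  · intro z
    obtain ⟨v, rfl⟩ := QuotientAddGroup.mk_surjective z
    obtain ⟨a, rfl⟩ := hsurj v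
    exact ⟨a, cmap_coe hd a⟩
  · intro n x' y
    obtain ⟨a, rfl⟩ := QuotientAddGroup.mk_surjective y
    obtain ⟨w, rfl, hw⟩ := exists_dist_eq_lift (F^[n] a) x'
    obtain ⟨a', rfl⟩ := hsurj.iterate n w
    refine ⟨a', iterate_cmap_coe hd n a', fun i hi => ?_⟩
    rw [iterate_cmap_coe hd, iterate_cmap_coe hd, iterate_cmap_coe hd, hw]
    refine (dist_coe_le _ _).trans ?_
    obtain ⟨k, rfl⟩ := Nat.exists_eq_add_of_le hi
    rw [Nat.add_sub_cancel_left, Nat.add_comm i k, Function.iterate_add_apply,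
      Function.iterate_add_apply]
    rcases Nat.eq_zero_or_pos k with rfl | hk
    · simpa using le_mul_of_one_le_left (abs_nonneg _) (le_max_right C⁻¹ 1)
    · have h := lift_expands (hdiffn k) (hexp k hk) (F^[i] a) (F^[i] a')
      have hl' : 0 < C * l ^ k := by positivity
      calc |F^[i] a - F^[i] a'| ≤ (C * l ^ k)⁻¹ * |F^[k] (F^[i] a) - F^[k] (F^[i] a')| := by
            rw [inv_mul_eq_div, le_div_iff₀ hl', mul_comm]; exact h
        _ = C⁻¹ * l⁻¹ ^ k * |F^[k] (F^[i] a) - F^[k] (F^[i] a')| := by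
            rw [mul_inv, inv_pow]
        _ ≤ _ := by gcongr; exact le_max_left _ _

lemma CrFun.exists_lipschitz (f : CrFun 1) : ∃ K : NNReal, LipschitzWith K f.1 := by
  have hf : ContDiff ℝ 1 fun x : ℝ => f.1 (x : Circle1) := f.2
  have hper : Function.Periodic (deriv fun x : ℝ => f.1 (x : Circle1)) 1 := by
    intro x
    rw [← deriv_comp_add_const]
    simp
  have hbdd := hper.isBounded_of_continuous one_ne_zero (hf.continuous_deriv le_rfl)
  obtain ⟨K, hK⟩ := hbdd.exists_norm_le
  refine ⟨K.toNNReal, ?_⟩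
  have hlip : LipschitzWith K.toNNReal fun x : ℝ => f.1 (x : Circle1) :=
    lipschitzWith_of_nnnorm_deriv_le (hf.differentiable (by simp)) fun x => by
      rw [← NNReal.coe_le_coe, coe_nnnorm]
      exact (hK _ (mem_range_self x)).trans (Real.le_coe_toNNReal K)
  refine LipschitzWith.of_dist_le_mul fun z z' => ?_
  obtain ⟨x, rfl⟩ := QuotientAddGroup.mk_surjective z
  obtain ⟨w, rfl, hw⟩ := exists_dist_eq_lift x z'
  change _ ≤ _ * dist (x : Circle1) w
  rw [hw]
  exact hlip.dist_le_mul x w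

/-! ### Maximal invariant subsets -/

section Abstract

variable {X : Type*} {T : X → X}

lemma isClosed_forward [MetricSpace X] {E : Set X} (hT : Continuous T) (hE : IsClosed E) :
    IsClosed {x | ∀ n : ℕ, T^[n] x ∈ E} := by
  simp only [ofPred_forall]
  exact isClosed_iInter fun n => hE.preimage (hT.iterate n)

/-- If the closed set `E` meets every fibre of `T`, finite backward orbits in `E` exist, and by
compactness so does an infinite forward orbit in `E`. -/
lemma forward_nonempty [MetricSpace X] [CompactSpace X] [Nonempty X] {E : Set X}
    (hT : Continuous T) (hE : IsClosed E)
    (hcal : ∀ x, ∃ y ∈ E, T y = x) : {x | ∀ n : ℕ, T^[n] x ∈ E}.Nonempty := by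
  have hcl (n : ℕ) : IsClosed {x | ∀ k < n, T^[k] x ∈ E} := by
    simp only [ofPred_forall]
    exact isClosed_iInter fun k => isClosed_iInter fun _ => hE.preimage (hT.iterate k)
  have hne (n : ℕ) : {x | ∀ k < n, T^[k] x ∈ E}.Nonempty := by
    induction n with
    | zero => exact ⟨Classical.arbitrary X, by simp⟩
    | succ n ih =>
      obtain ⟨x, hx⟩ := ih
      obtain ⟨y, hy, rfl⟩ := hcal x
      refine ⟨y, fun k hk => ?_⟩
      cases k with
      | zero => exact hy
      | succ k => exact hx k (by omega)
  obtain ⟨x, hx⟩ := IsCompact.nonempty_iInter_of_sequence_nonempty_isCompact_isClosed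
    (fun n : ℕ => {x | ∀ k < n, T^[k] x ∈ E})
    (fun n x hx k hk => hx k (by omega)) hne (hcl 0).isCompact hcl
  exact ⟨x, fun n => mem_iInter.1 hx (n + 1) n (by omega)⟩

lemma iterate_image_antitone {S : Set X} (hS : MapsTo T S S) (n : ℕ) :
    T^[n + 1] '' S ⊆ T^[n] '' S := by
  rintro _ ⟨x, hx, rfl⟩
  exact ⟨T x, hS hx, rfl⟩

lemma core_nonempty [MetricSpace X] [CompactSpace X] {S : Set X} (hT : Continuous T)
    (hS : IsClosed S) (hST : MapsTo T S S)
    (hne : S.Nonempty) : (⋂ n : ℕ, T^[n] '' S).Nonempty :=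
  IsCompact.nonempty_iInter_of_sequence_nonempty_isCompact_isClosed _
    (iterate_image_antitone hST) (fun _ => hne.image _)
    (hS.isCompact.image (hT.iterate 0))
    fun n => (hS.isCompact.image (hT.iterate n)).isClosed

/-- The core of a forward invariant closed set is strictly invariant; a preimage inside the core
is found by compactness of the fibre. -/
lemma core_image [MetricSpace X] [CompactSpace X] {S : Set X} (hT : Continuous T)
    (hS : IsClosed S) (hST : MapsTo T S S) :
    T '' (⋂ n : ℕ, T^[n] '' S) = ⋂ n : ℕ, T^[n] '' S := by
  apply Subset.antisymm
  · rintro _ ⟨x, hx, rfl⟩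
    refine mem_iInter.2 fun n => ?_
    obtain ⟨y, hy, rfl⟩ := mem_iInter.1 hx n
    exact ⟨T y, hST hy, by rw [← Function.iterate_succ_apply, Function.iterate_succ_apply']⟩
  · intro x hx
    have hcl (n : ℕ) : IsClosed (T^[n] '' S ∩ T ⁻¹' {x}) :=
      (hS.isCompact.image (hT.iterate n)).isClosed.inter (isClosed_singleton.preimage hT)
    obtain ⟨y, hy⟩ := IsCompact.nonempty_iInter_of_sequence_nonempty_isCompact_isClosed
      (fun n : ℕ => T^[n] '' S ∩ T ⁻¹' {x})
      (fun n => inter_subset_inter_left _ (iterate_image_antitone hST n))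
      (fun n => by
        obtain ⟨z, hz, hzx⟩ := mem_iInter.1 hx (n + 1)
        exact ⟨T^[n] z, ⟨z, hz, rfl⟩, by rw [← hzx, Function.iterate_succ_apply']; rfl⟩)
      (hcl 0).isCompact hcl
    exact ⟨y, mem_iInter.2 fun n => (mem_iInter.1 hy n).1, (mem_iInter.1 hy 0).2⟩

/-! ### Birkhoff sums along contracting inverse branches -/

/-- Shadowing changes a Birkhoff sum by at most a geometric series. The resulting constant
`K M / (1 - θ)` is independent of `n`; it bounds the Lipschitz constants of the functions
`x ↦ max_{Tⁿ y = x} Sₙ f(y)` and of all calibrated sub-actions. -/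
lemma birkhoffSum_le_of_backContr [MetricSpace X] {M θ : ℝ} (hM : 0 < M) (hθ : 0 < θ)
    (hθ1 : θ < 1) {f : X → ℝ} {K : NNReal} (hf : LipschitzWith K f) (n : ℕ) (y y' : X) (D : ℝ) (hD : 0 ≤ D)
    (h : ∀ i ≤ n, dist (T^[i] y) (T^[i] y') ≤ M * θ ^ (n - i) * D) :
    birkhoffSum T f n y ≤ birkhoffSum T f n y' + K * M / (1 - θ) * D := by
  have h1 : birkhoffSum T f n y - birkhoffSum T f n y'
      ≤ ∑ i ∈ Finset.range n, K * M * D * θ ^ (n - 1 - i) := by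
    rw [birkhoffSum, birkhoffSum, ← Finset.sum_sub_distrib]
    refine Finset.sum_le_sum fun i hi => ?_
    have hi' := Finset.mem_range.1 hi
    have hle : θ ^ (n - i) ≤ θ ^ (n - 1 - i) := pow_le_pow_of_le_one hθ.le hθ1.le (by omega)
    calc f (T^[i] y) - f (T^[i] y') ≤ dist (f (T^[i] y)) (f (T^[i] y')) := le_abs_self _
      _ ≤ K * dist (T^[i] y) (T^[i] y') := hf.dist_le_mul _ _
      _ ≤ K * (M * θ ^ (n - i) * D) := by gcongr; exact h i hi'.le
      _ ≤ K * (M * θ ^ (n - 1 - i) * D) := by gcongr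
      _ = K * M * D * θ ^ (n - 1 - i) := by ring
  rw [Finset.sum_range_reflect (fun i => K * M * D * θ ^ i) n, ← Finset.mul_sum] at h1
  have h2 : ∑ i ∈ Finset.range n, θ ^ i ≤ (1 - θ)⁻¹ := by
    rw [← tsum_geometric_of_lt_one hθ.le hθ1]
    exact (summable_geometric_of_lt_one hθ.le hθ1).sum_le_tsum _ fun i _ => by positivity
  have h3 : K * M * D * ∑ i ∈ Finset.range n, θ ^ i ≤ K * M * D * (1 - θ)⁻¹ := by gcongr
  have h4 : K * M / (1 - θ) * D = K * M * D * (1 - θ)⁻¹ := by rw [div_eq_mul_inv]; ring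
  linarith

lemma subaction_iterate {f g : X → ℝ} {b : ℝ} (hsub : ∀ x, g x + f x ≤ g (T x) + b) (n : ℕ)
    (x : X) : g x + birkhoffSum T f n x ≤ g (T^[n] x) + n * b := by
  induction n with
  | zero => simp
  | succ n ih =>
    have := hsub (T^[n] x)
    rw [birkhoffSum_succ, Function.iterate_succ_apply']
    push_cast
    linarith

lemma calibrated_iterate {f g : X → ℝ} {b : ℝ} (hcal : ∀ x, ∃ y, T y = x ∧ g y + f y = g x + b)
    (n : ℕ) (x : X) : ∃ y, T^[n] y = x ∧ g y + birkhoffSum T f n y = g x + n * b := by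
  induction n with
  | zero => exact ⟨x, by simp⟩
  | succ n ih =>
    obtain ⟨y, rfl, hy⟩ := ih
    obtain ⟨z, rfl, hz⟩ := hcal y
    refine ⟨z, rfl, ?_⟩
    rw [birkhoffSum_succ']
    push_cast
    linarith

/-- Every Lipschitz calibrated sub-action obeys the same explicit Lipschitz bound: compare a
calibrated backward orbit of `x` with the backward orbit of `x'` along the same inverse branches. -/
lemma calibrated_lipschitz [MetricSpace X] {M θ : ℝ} (hM : 0 < M) (hθ : 0 < θ) (hθ1 : θ < 1)
    (hBC : BackContr T M θ) {f : X → ℝ} {K : NNReal} (hf : LipschitzWith K f)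
    {g : X → ℝ} {b : ℝ} {Kg : NNReal} (hg : LipschitzWith Kg g)
    (hsub : ∀ x, g x + f x ≤ g (T x) + b) (hcal : ∀ x, ∃ y, T y = x ∧ g y + f y = g x + b)
    (x x' : X) : g x ≤ g x' + K * M / (1 - θ) * dist x x' := by
  have key (n : ℕ) : g x ≤ g x' + K * M / (1 - θ) * dist x x' + Kg * (M * θ ^ n * dist x x') := by
    obtain ⟨y, hy, hgy⟩ := calibrated_iterate hcal n x
    obtain ⟨y', rfl, hd⟩ := hBC n x' y
    rw [hy] at hd
    have h1 := birkhoffSum_le_of_backContr hM hθ hθ1 hf n y y' _ dist_nonneg hd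
    have h2 := subaction_iterate hsub n y'
    have h3 : g y - g y' ≤ Kg * (M * θ ^ n * dist x (T^[n] y')) :=
      calc g y - g y' ≤ dist (g y) (g y') := le_abs_self _
        _ ≤ Kg * dist y y' := hg.dist_le_mul _ _
        _ ≤ _ := by gcongr; simpa using hd 0 n.zero_le
    linarith
  have hlim : Tendsto (fun n : ℕ => g x' + K * M / (1 - θ) * dist x x'
      + Kg * (M * θ ^ n * dist x x')) atTop
      (𝓝 (g x' + K * M / (1 - θ) * dist x x' + Kg * (M * 0 * dist x x'))) :=
    ((((tendsto_pow_atTop_nhds_zero_of_lt_one hθ.le hθ1).const_mul M).mul_const _).const_mul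
      _).const_add _
  simpa using ge_of_tendsto' hlim key

/-! ### Existence of a calibrated sub-action -/

/-- A quasi-additive sequence stays at bounded distance from a linear one (Fekete's lemma applied
to `a + D` and `D - a`). -/
lemma exists_slope {a : ℕ → ℝ} {D : ℝ} (h : ∀ m n, |a (m + n) - a m - a n| ≤ D) :
    ∃ b : ℝ, ∀ n : ℕ, |a n - n * b| ≤ D := by
  have h1 : Subadditive fun n => a n + D := fun m n => by
    have := (abs_le.1 (h m n)).2; linarith
  have h2 : Subadditive fun n => D - a n := fun m n => by
    have := (abs_le.1 (h m n)).1; linarith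
  have h0 : |a 0| ≤ D := by simpa using h 0 0
  have hgrow (n : ℕ) : |a n - n * a 1| ≤ (n + 1) * D := by
    induction n with
    | zero => simpa using h0
    | succ n ih =>
      have h3 := abs_le.1 (h n 1)
      rw [abs_le] at ih ⊢
      push_cast
      constructor <;> linarith [ih.1, ih.2, h3.1, h3.2]
  have hD : 0 ≤ D := (abs_nonneg _).trans h0
  have hb1 : BddBelow (range fun n : ℕ => (a n + D) / n) := by
    refine ⟨-(|a 1| + 2 * D), ?_⟩
    rintro _ ⟨n, rfl⟩
    rcases Nat.eq_zero_or_pos n with rfl | hn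
    · simp only [Nat.cast_zero, div_zero]; linarith [abs_nonneg (a 1)]
    · have hn' : (1 : ℝ) ≤ n := by exact_mod_cast hn
      change _ ≤ (a n + D) / n
      rw [le_div_iff₀ (by positivity)]
      nlinarith [(abs_le.1 (hgrow n)).1, neg_abs_le (a 1)]
  have hb2 : BddBelow (range fun n : ℕ => (D - a n) / n) := by
    refine ⟨-(|a 1| + 2 * D), ?_⟩
    rintro _ ⟨n, rfl⟩
    rcases Nat.eq_zero_or_pos n with rfl | hn
    · simp only [Nat.cast_zero, div_zero]; linarith [abs_nonneg (a 1)]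
    · have hn' : (1 : ℝ) ≤ n := by exact_mod_cast hn
      change _ ≤ (D - a n) / n
      rw [le_div_iff₀ (by positivity)]
      nlinarith [(abs_le.1 (hgrow n)).2, le_abs_self (a 1)]
  have hsum : h2.lim = - h1.lim := by
    have ht := (h1.tendsto_lim hb1).add (h2.tendsto_lim hb2)
    have ht' : Tendsto (fun n : ℕ => (a n + D) / n + (D - a n) / n) atTop (𝓝 0) := by
      refine (tendsto_const_div_atTop_nhds_zero_nat (2 * D)).congr fun n => ?_
      rw [← add_div]; ring_nf
    linarith [tendsto_nhds_unique ht ht']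
  refine ⟨h1.lim, fun n => ?_⟩
  rcases Nat.eq_zero_or_pos n with rfl | hn
  · simpa using h0
  · have hn' : (0 : ℝ) < n := by exact_mod_cast hn
    have h3 := h1.lim_le_div hb1 hn.ne'
    have h4 := h2.lim_le_div hb2 hn.ne'
    rw [hsum] at h4
    rw [le_div_iff₀ hn'] at h3 h4
    rw [abs_le]
    constructor <;> linarith

/-- The limsup of a bounded family, characterised pointwise. -/
lemma exists_limsup {w : ℕ → X → ℝ} {B : ℝ} (hw : ∀ n x, |w n x| ≤ B) :
    ∃ g : X → ℝ, ∀ x, ∀ ε > 0,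
      (∀ᶠ n in atTop, w n x < g x + ε) ∧ ∃ᶠ n in atTop, g x - ε < w n x := by
  refine ⟨fun x => limsup (fun n => w n x) atTop, fun x ε hε => ⟨?_, ?_⟩⟩
  · exact eventually_lt_of_limsup_lt (by linarith)
      (isBoundedUnder_of ⟨B, fun n => (abs_le.1 (hw n x)).2⟩)
  · refine frequently_lt_of_lt_limsup ?_ (by linarith)
    exact IsBoundedUnder.isCoboundedUnder_le
      (isBoundedUnder_of ⟨-B, fun n => (abs_le.1 (hw n x)).1⟩)

/-- The maximal Birkhoff sums `uₙ(x) = max_{Tⁿ y = x} Sₙ f(y)` are attained. -/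
lemma exists_maxSum [MetricSpace X] [CompactSpace X] {f : X → ℝ} (hT : Continuous T)
    (hs : Function.Surjective T) (hf : Continuous f) :
    ∃ u : ℕ → X → ℝ, (∀ n y, birkhoffSum T f n y ≤ u n (T^[n] y)) ∧
      ∀ n x, ∃ y, T^[n] y = x ∧ u n x = birkhoffSum T f n y := by
  have h (n : ℕ) (x : X) : ∃ y, T^[n] y = x ∧
      ∀ z, T^[n] z = x → birkhoffSum T f n z ≤ birkhoffSum T f n y := by
    have hc : Continuous (birkhoffSum T f n) := by
      unfold birkhoffSum
      exact continuous_finsetSum _ fun i _ => hf.comp (hT.iterate i)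
    obtain ⟨y, hy, hmax⟩ := (isClosed_singleton.preimage (hT.iterate n)).isCompact.exists_isMaxOn
      (s := T^[n] ⁻¹' {x}) (hs.iterate n x) hc.continuousOn
    exact ⟨y, hy, fun z hz => hmax hz⟩
  choose y hy hmax using h
  exact ⟨fun n x => birkhoffSum T f n (y n x), fun n z => hmax n _ z rfl,
    fun n x => ⟨y n x, hy n x, rfl⟩⟩

/-- Existence of a calibrated sub-action with some constant `b`: with `uₙ` the maximal Birkhoff
sums, `uₙ - n b` is uniformly bounded and equi-Lipschitz, and its limsup is calibrated. -/
lemma exists_calibrated [MetricSpace X] [CompactSpace X] [Nonempty X] {M θ : ℝ} (hM : 0 < M)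
    (hθ : 0 < θ) (hθ1 : θ < 1) (hT : Continuous T) (hs : Function.Surjective T)
    (hBC : BackContr T M θ) {f : X → ℝ} {K : NNReal} (hf : LipschitzWith K f) :
    ∃ (g : X → ℝ) (b : ℝ), (∃ Kg : NNReal, LipschitzWith Kg g) ∧
      (∀ x, g x + f x ≤ g (T x) + b) ∧ ∀ x, ∃ y, T y = x ∧ g y + f y = g x + b := by
  obtain ⟨u, hu, hu'⟩ := exists_maxSum hT hs hf.continuous
  set L : ℝ := K * M / (1 - θ) with hL
  have hL0 : 0 ≤ L := div_nonneg (by positivity) (by linarith)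
  have hlip (n : ℕ) (x x' : X) : u n x ≤ u n x' + L * dist x x' := by
    obtain ⟨y, rfl, hy⟩ := hu' n x
    obtain ⟨y', rfl, hd⟩ := hBC n x' y
    rw [hy]
    have h1 := birkhoffSum_le_of_backContr hM hθ hθ1 hf n y y' _ dist_nonneg hd
    linarith [hu n y']
  set D : ℝ := L * Metric.diam (univ : Set X) with hDdef
  have hosc (n : ℕ) (x x' : X) : u n x ≤ u n x' + D := by
    refine (hlip n x x').trans ?_
    rw [hDdef]
    gcongr
    exact Metric.dist_le_diam_of_mem Metric.isBounded_of_compactSpace (mem_univ x) (mem_univ x')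
  let p : X := Classical.arbitrary X
  have hquasi (m n : ℕ) : |u (m + n) p - u m p - u n p| ≤ D := by
    rw [abs_le]
    constructor
    · obtain ⟨v, hv, hv'⟩ := hu' n p
      obtain ⟨z, rfl, hz⟩ := hu' m v
      have h1 := hu (m + n) z
      rw [birkhoffSum_add, add_comm m n, Function.iterate_add_apply, hv] at h1
      rw [add_comm m n]
      linarith [hosc m p (T^[m] z)]
    · obtain ⟨z, hz, hz'⟩ := hu' (m + n) p
      rw [birkhoffSum_add] at hz'
      have h1 := hu n (T^[m] z)
      rw [← Function.iterate_add_apply, add_comm n m, hz] at h1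
      linarith [hu m z, hosc m (T^[m] z) p]
  obtain ⟨b, hb⟩ := exists_slope (a := fun n => u n p) hquasi
  let w : ℕ → X → ℝ := fun n x => u n x - n * b
  have hwB (n : ℕ) (x : X) : |w n x| ≤ 2 * D := by
    have h1 := abs_le.1 (hb n)
    rw [abs_le]
    constructor <;> simp only [w] <;> linarith [hosc n x p, hosc n p x]
  have hwlip (n : ℕ) (x x' : X) : w n x ≤ w n x' + L * dist x x' := by
    simp only [w]; linarith [hlip n x x']
  have hrec (n : ℕ) (y : X) : w n y + f y ≤ w (n + 1) (T y) + b := by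
    obtain ⟨z, rfl, hz⟩ := hu' n y
    have h1 := hu (n + 1) z
    rw [birkhoffSum_succ, Function.iterate_succ_apply'] at h1
    simp only [w]; push_cast; linarith
  have hrec' (n : ℕ) (x : X) : ∃ y, T y = x ∧ w (n + 1) x + b ≤ w n y + f y := by
    obtain ⟨z, rfl, hz⟩ := hu' (n + 1) x
    rw [birkhoffSum_succ] at hz
    refine ⟨T^[n] z, (Function.iterate_succ_apply' T n z).symm, ?_⟩
    simp only [w]; push_cast; linarith [hu n z]
  obtain ⟨g, hg⟩ := exists_limsup hwB
  have hglip (x x' : X) : g x ≤ g x' + L * dist x x' := by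
    refine le_of_forall_pos_le_add fun ε hε => ?_
    obtain ⟨n, h1, h2⟩ := ((hg x (ε / 2) (by positivity)).2.and_eventually
      (hg x' (ε / 2) (by positivity)).1).exists
    linarith [hwlip n x x']
  have hgL : LipschitzWith L.toNNReal g := by
    refine LipschitzWith.of_le_add_mul _ fun x x' => ?_
    rw [Real.coe_toNNReal _ hL0]
    exact hglip x x'
  have hsub (y : X) : g y + f y ≤ g (T y) + b := by
    refine le_of_forall_pos_le_add fun ε hε => ?_
    obtain ⟨n, h1, h2⟩ := ((hg y (ε / 2) (by positivity)).2.and_eventually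
      ((tendsto_add_atTop_nat 1).eventually (hg (T y) (ε / 2) (by positivity)).1)).exists
    linarith [hrec n y]
  refine ⟨g, b, ⟨_, hgL⟩, hsub, fun x => ?_⟩
  have hcomp : IsCompact (T ⁻¹' {x}) := (isClosed_singleton.preimage hT).isCompact
  -- By continuity of `g` the maximum over the fibre is attained, so approximate calibration
  -- at every scale is enough.
  obtain ⟨y, hy, hmax⟩ := hcomp.exists_isMaxOn (hs x)
    (hgL.continuous.add hf.continuous).continuousOn
  refine ⟨y, hy, le_antisymm (by simpa [show T y = x from hy] using hsub y) ?_⟩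
  refine le_of_forall_pos_le_add fun ε hε => ?_
  have hfreq : ∃ᶠ n in atTop, g x - ε / 4 < w (n + 1) x := by
    have h1 := (hg x (ε / 4) (by positivity)).2
    rw [frequently_atTop] at h1 ⊢
    intro k
    obtain ⟨n, hn, h2⟩ := h1 (k + 1)
    exact ⟨n - 1, by omega, by rwa [Nat.sub_add_cancel (by omega)]⟩
  choose yn hyn hyn' using fun n => hrec' n x
  obtain ⟨φ, hφ, hφ'⟩ := extraction_of_frequently_atTop hfreq
  obtain ⟨z, hz, ψ, hψ, hlim⟩ := hcomp.tendsto_subseq (x := yn ∘ φ) fun n => hyn (φ n)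
  have hd : Tendsto (fun n => L * dist (yn (φ (ψ n))) z) atTop (𝓝 (L * 0)) :=
    (tendsto_iff_dist_tendsto_zero.1 hlim).const_mul L
  have hfz : Tendsto (fun n => f (yn (φ (ψ n)))) atTop (𝓝 (f z)) :=
    (hf.continuous.tendsto z).comp hlim
  rw [mul_zero] at hd
  obtain ⟨n, h1, h2, h3⟩ := ((hd.eventually_lt_const (u := ε / 4) (by positivity)).and
    ((hfz.eventually_lt_const (u := f z + ε / 4) (by linarith)).and
    ((hφ.tendsto_atTop.comp hψ.tendsto_atTop).eventually (hg z (ε / 4) (by positivity)).1))).exists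
  have h4 := hφ' (ψ n)
  have h5 := hyn' (φ (ψ n))
  have h6 := hwlip (φ (ψ n)) (yn (φ (ψ n))) z
  have h7 : g z + f z ≤ g y + f y := hmax hz
  simp only [Function.comp_apply] at h3
  linarith

end Abstract

/-! ### The constant is the maximal ergodic average -/

/-- The empirical measure of the orbit segment `x, T x, …, Tⁿ x`. -/
noncomputable def empirical (T : Circle1 → Circle1) (x : Circle1) (n : ℕ) : Measure Circle1 :=
  ((n + 1 : ℕ) : ENNReal)⁻¹ • ∑ i ∈ Finset.range (n + 1), Measure.dirac (T^[i] x)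

instance (T : Circle1 → Circle1) (x : Circle1) (n : ℕ) :
    IsProbabilityMeasure (empirical T x n) := by
  constructor
  simp only [empirical, Measure.smul_apply, Measure.coe_finsetSum, Finset.sum_apply, measure_univ,
    smul_eq_mul, Finset.sum_const, Finset.card_range, nsmul_eq_mul, mul_one]
  exact ENNReal.inv_mul_cancel (by simp) (ENNReal.natCast_ne_top _)

lemma integral_empirical (T : Circle1 → Circle1) (x : Circle1) (n : ℕ) {φ : Circle1 → ℝ}
    (hφ : Continuous φ) :
    ∫ z, φ z ∂(empirical T x n) = birkhoffSum T φ (n + 1) x / (n + 1 : ℕ) := by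
  rw [empirical, integral_smul_measure, integral_finsetSum_measure]
  · simp only [integral_dirac, ENNReal.toReal_inv, ENNReal.toReal_natCast, smul_eq_mul]
    rw [birkhoffSum, inv_mul_eq_div]
  · intro i _
    exact hφ.integrable_of_hasCompactSupport (HasCompactSupport.of_compactSpace φ)

/-- Krylov–Bogoliubov along a single orbit: an invariant probability measure whose integrals are
the limits of Birkhoff averages, whenever these converge. -/
lemma exists_invariant {T : Circle1 → Circle1} (hT : Continuous T) (x : Circle1) :
    ∃ μ : Measure Circle1, InvProb T μ ∧ ∀ (φ : Circle1 → ℝ) (c : ℝ), Continuous φ →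
      Tendsto (fun n : ℕ => birkhoffSum T φ (n + 1) x / (n + 1 : ℕ)) atTop (𝓝 c) →
        ∫ z, φ z ∂μ = c := by
  let P : ℕ → ProbabilityMeasure Circle1 := fun n => ⟨empirical T x n, inferInstance⟩
  let U : Ultrafilter ℕ := hyperfilter ℕ
  have hU : (U : Filter ℕ) ≤ atTop := by
    rw [← Nat.cofinite_eq_atTop]; exact hyperfilter_le_cofinite
  obtain ⟨μ, hμ⟩ : ∃ μ, Tendsto P U (𝓝 μ) := ⟨_, (U.map P).le_nhds_lim⟩
  have hint (φ : Circle1 → ℝ) (hφ : Continuous φ) :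
      Tendsto (fun n : ℕ => birkhoffSum T φ (n + 1) x / (n + 1 : ℕ)) U
        (𝓝 (∫ z, φ z ∂(μ : Measure Circle1))) := by
    have h := ProbabilityMeasure.tendsto_iff_forall_integral_tendsto.1 hμ
      (BoundedContinuousFunction.mkOfCompact ⟨φ, hφ⟩)
    refine h.congr fun n => ?_
    exact integral_empirical T x n hφ
  refine ⟨μ, ⟨inferInstance, ?_⟩, fun φ c hφ hc =>
    tendsto_nhds_unique (hint φ hφ) (hc.mono_left hU)⟩
  have : IsProbabilityMeasure ((μ : Measure Circle1).map T) :=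
    Measure.isProbabilityMeasure_map hT.aemeasurable
  refine ext_of_forall_integral_eq_of_IsFiniteMeasure fun φ => ?_
  rw [integral_map hT.aemeasurable φ.continuous.aestronglyMeasurable]
  have h1 := (hint (fun z => φ (T z)) (φ.continuous.comp hT)).sub (hint φ φ.continuous)
  have h2 : Tendsto (fun n : ℕ => birkhoffSum T (fun z => φ (T z)) (n + 1) x / (n + 1 : ℕ)
      - birkhoffSum T φ (n + 1) x / (n + 1 : ℕ)) atTop (𝓝 0) := by
    have hlim : Tendsto (fun n : ℕ => 2 * ‖φ‖ / ((n + 1 : ℕ) : ℝ)) atTop (𝓝 0) :=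
      (tendsto_const_div_atTop_nhds_zero_nat (2 * ‖φ‖)).comp (tendsto_add_atTop_nat 1)
    refine squeeze_zero_norm (fun n => ?_) hlim
    -- The two Birkhoff sums telescope.
    have htel : birkhoffSum T (fun z => φ (T z)) (n + 1) x - birkhoffSum T φ (n + 1) x
        = φ (T^[n + 1] x) - φ x := by
      rw [← birkhoffSum_apply_sub_birkhoffSum]
      congr 1
      simp only [birkhoffSum, ← Function.iterate_succ_apply, ← Function.iterate_succ_apply']
    rw [← sub_div, htel, norm_div, Real.norm_natCast]
    gcongr
    calc ‖φ (T^[n + 1] x) - φ x‖ ≤ ‖φ (T^[n + 1] x)‖ + ‖φ x‖ := norm_sub_le _ _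
      _ ≤ 2 * ‖φ‖ := by linarith [φ.norm_coe_le_norm (T^[n + 1] x), φ.norm_coe_le_norm x]
  linarith [tendsto_nhds_unique h1 (h2.mono_left hU)]

lemma isClosed_eqSet {f g : Circle1 → ℝ} {T : Circle1 → Circle1} (hT : Continuous T)
    (hf : Continuous f) (hg : Continuous g) (b : ℝ) :
    IsClosed {x | g x + f x = g (T x) + b} :=
  isClosed_eq (hg.add hf) ((hg.comp hT).add_const b)

/-- The constant of a calibrated sub-action is `β(f,T)`: it bounds every `∫ f dμ` by invariance,
and it is the Birkhoff average of `f` along any orbit contained in the equality set. -/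
lemma beta_eq {f g : Circle1 → ℝ} {T : Circle1 → Circle1} (hT : Continuous T)
    (hf : Continuous f) (hg : Continuous g) {b : ℝ} (hsub : ∀ x, g x + f x ≤ g (T x) + b)
    (hcal : ∀ x, ∃ y, T y = x ∧ g y + f y = g x + b) : beta f T = b := by
  have hint {φ : Circle1 → ℝ} (hφ : Continuous φ) (μ : Measure Circle1) [IsProbabilityMeasure μ] :
      Integrable φ μ := hφ.integrable_of_hasCompactSupport (HasCompactSupport.of_compactSpace φ)
  obtain ⟨x, hx⟩ := forward_nonempty hT (isClosed_eqSet hT hf hg b) fun x => by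
    obtain ⟨y, rfl, hy⟩ := hcal x
    exact ⟨y, hy, rfl⟩
  obtain ⟨μ, hμ, hμint⟩ := exists_invariant hT x
  have hgB : ∃ B, ∀ z, |g z| ≤ B := by
    obtain ⟨B, hB⟩ := (isCompact_range hg).isBounded.exists_norm_le
    exact ⟨B, fun z => hB _ (mem_range_self z)⟩
  obtain ⟨B, hB⟩ := hgB
  have hS (n : ℕ) : birkhoffSum T f n x = g (T^[n] x) - g x + n * b := by
    induction n with
    | zero => simp
    | succ n ih =>
      have h1 : g (T^[n] x) + f (T^[n] x) = g (T (T^[n] x)) + b := hx n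
      rw [birkhoffSum_succ, Function.iterate_succ_apply', ih]
      push_cast
      linarith
  have hval : ∫ z, f z ∂μ = b := by
    refine hμint f b hf ?_
    have hlim : Tendsto (fun n : ℕ => 2 * B / ((n + 1 : ℕ) : ℝ)) atTop (𝓝 0) :=
      (tendsto_const_div_atTop_nhds_zero_nat (2 * B)).comp (tendsto_add_atTop_nat 1)
    rw [tendsto_iff_norm_sub_tendsto_zero]
    refine squeeze_zero (fun _ => norm_nonneg _) (fun n => ?_) hlim
    have hn : ((n + 1 : ℕ) : ℝ) ≠ 0 := by positivity
    rw [hS, add_div, mul_div_cancel_left₀ _ hn, add_sub_cancel_right, norm_div, Real.norm_natCast]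
    gcongr
    refine (norm_sub_le _ _).trans ?_
    rw [Real.norm_eq_abs, Real.norm_eq_abs]
    linarith [hB (T^[n + 1] x), hB x]
  refine IsGreatest.csSup_eq ⟨⟨μ, hμ, hval⟩, ?_⟩
  rintro _ ⟨ν, ⟨hν, hνT⟩, rfl⟩
  have h1 : ∫ z, (g z + f z) ∂ν ≤ ∫ z, (g (T z) + b) ∂ν :=
    integral_mono (hint (hg.add hf) ν) (hint ((hg.comp hT).add_const b) ν) hsub
  have h2 : ∫ z, g (T z) ∂ν = ∫ z, g z ∂ν := by
    conv_rhs => rw [← hνT]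
    rw [integral_map hT.aemeasurable hg.aestronglyMeasurable]
  rw [integral_add (hint hg ν) (hint hf ν),
    integral_add (f := fun z => g (T z)) (hint (hg.comp hT) ν) (integrable_const b), h2,
    integral_const] at h1
  simpa using h1

/-! ### Compactness -/

lemma lambdaStar_mapsTo (f : Circle1 → ℝ) (T : Circle1 → Circle1) (g : Circle1 → ℝ) :
    MapsTo T (LambdaStar f T g) (LambdaStar f T g) := fun x hx n => by
  rw [← Function.iterate_succ_apply]
  exact hx (n + 1)

lemma isClosed_lambdaStar {f g : Circle1 → ℝ} {T : Circle1 → Circle1} (hT : Continuous T)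
    (hf : Continuous f) (hg : Continuous g) : IsClosed (LambdaStar f T g) :=
  isClosed_forward hT (isClosed_eqSet hT hf hg _)

lemma lambda_image {f g : Circle1 → ℝ} {T : Circle1 → Circle1} (hT : Continuous T)
    (hf : Continuous f) (hg : Continuous g) : T '' Lambda f T g = Lambda f T g :=
  core_image hT (isClosed_lambdaStar hT hf hg) (lambdaStar_mapsTo f T g)

lemma lambda_nonempty {f g : Circle1 → ℝ} {T : Circle1 → Circle1} (hT : Continuous T)
    (hf : Continuous f) (hg : IsCalibrated f T g) : (Lambda f T g).Nonempty := by
  refine core_nonempty hT (isClosed_lambdaStar hT hf hg.1.1) (lambdaStar_mapsTo f T g) ?_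
  refine forward_nonempty hT (isClosed_eqSet hT hf hg.1.1 _) fun x => ?_
  obtain ⟨y, rfl, hy⟩ := hg.2 x
  exact ⟨y, hy, rfl⟩

open BoundedContinuousFunction in
/-- The calibrated sub-actions normalised by `g 0 = 0` with a given Lipschitz constant form a
compact set, by Arzelà–Ascoli. -/
lemma isCompact_normalised {f : Circle1 → ℝ} {T : Circle1 → Circle1} (hT : Continuous T)
    (hf : Continuous f) (L : NNReal) :
    IsCompact {g : Circle1 →ᵇ ℝ | g 0 = 0 ∧ LipschitzWith L g ∧ IsCalibrated f T g} := by
  have hev : Continuous fun q : (Circle1 →ᵇ ℝ) × Circle1 => q.1 q.2 := continuous_eval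
  have hevx (x : Circle1) : Continuous fun g : Circle1 →ᵇ ℝ => g x := continuous_eval_const x
  refine arzela_ascoli₂ (Metric.closedBall 0 (L * Metric.diam (univ : Set Circle1)))
    (isCompact_closedBall _ _) _ ?_ ?_ ?_
  · have h1 : IsClosed {g : Circle1 →ᵇ ℝ | LipschitzWith L g} := by
      simp only [lipschitzWith_iff_dist_le_mul, ofPred_forall]
      exact isClosed_iInter fun x => isClosed_iInter fun y =>
        isClosed_le ((hevx x).dist (hevx y)) continuous_const
    have h2 : IsClosed {g : Circle1 →ᵇ ℝ | ∀ x, g x + f x ≤ g (T x) + beta f T} := by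
      simp only [ofPred_forall]
      exact isClosed_iInter fun x =>
        isClosed_le ((hevx x).add_const _) ((hevx (T x)).add_const _)
    have h3 : IsClosed {g : Circle1 →ᵇ ℝ | ∀ x, ∃ y, T y = x ∧ g y + f y = g x + beta f T} := by
      simp only [ofPred_forall]
      refine isClosed_iInter fun x => ?_
      -- A projection along the compact circle.
      have hcl : IsClosed {q : (Circle1 →ᵇ ℝ) × Circle1 |
          T q.2 = x ∧ q.1 q.2 + f q.2 = q.1 x + beta f T} :=
        (isClosed_eq (hT.comp continuous_snd) continuous_const).inter
          (isClosed_eq (hev.add (hf.comp continuous_snd))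
            (((hevx x).comp continuous_fst).add_const _))
      convert isClosedMap_fst_of_compactSpace _ hcl
      ext g
      simp
    have h0 : IsClosed {g : Circle1 →ᵇ ℝ | g 0 = 0} := isClosed_eq (hevx 0) continuous_const
    convert h0.inter (h1.inter (h2.inter h3))
    ext g
    simp only [mem_ofPred_eq, mem_inter_iff, IsCalibrated, IsSubaction]
    have := g.continuous
    tauto
  · rintro g x ⟨hg0, hgL, -⟩
    rw [mem_closedBall_zero_iff, ← sub_zero (g x), ← hg0, ← dist_eq_norm]
    refine (hgL.dist_le_mul x 0).trans ?_
    gcongr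
    exact Metric.dist_le_diam_of_mem Metric.isBounded_of_compactSpace (mem_univ _) (mem_univ _)
  · exact (LipschitzWith.uniformEquicontinuous _ L fun g => g.2.2.1).equicontinuous

lemma eset_sub_const (f : Circle1 → ℝ) (T : Circle1 → Circle1) (g : Circle1 → ℝ) (c : ℝ) :
    Eset f T (fun x => g x - c) = Eset f T g := by
  ext x
  simp only [Eset, mem_ofPred_eq]
  constructor <;> intro h <;> linarith

lemma lambda_sub_const (f : Circle1 → ℝ) (T : Circle1 → Circle1) (g : Circle1 → ℝ) (c : ℝ) :
    Lambda f T (fun x => g x - c) = Lambda f T g := by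
  simp only [Lambda, LambdaStar, eset_sub_const]

open BoundedContinuousFunction in
/-- The relation `x ∈ Λ_{f,T,g}` is closed in the pair `(g, x)`. -/
lemma isClosed_graph {f : Circle1 → ℝ} {T : Circle1 → Circle1} (hT : Continuous T)
    (hf : Continuous f) : IsClosed {q : (Circle1 →ᵇ ℝ) × Circle1 | q.2 ∈ Lambda f T q.1} := by
  have hev : Continuous fun q : (Circle1 →ᵇ ℝ) × Circle1 => q.1 q.2 := continuous_eval
  simp only [Lambda, mem_iInter, ofPred_forall]
  refine isClosed_iInter fun n => ?_
  have hcl : IsClosed {q : ((Circle1 →ᵇ ℝ) × Circle1) × Circle1 |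
      q.2 ∈ LambdaStar f T q.1.1 ∧ T^[n] q.2 = q.1.2} := by
    suffices hstar : IsClosed {q : ((Circle1 →ᵇ ℝ) × Circle1) × Circle1 |
        q.2 ∈ LambdaStar f T q.1.1} from
      hstar.inter (isClosed_eq ((hT.iterate n).comp continuous_snd)
        (continuous_snd.comp continuous_fst))
    have heq : {q : ((Circle1 →ᵇ ℝ) × Circle1) × Circle1 | q.2 ∈ LambdaStar f T q.1.1} =
        ⋂ k : ℕ, {q | q.1.1 (T^[k] q.2) + f (T^[k] q.2) =
          q.1.1 (T (T^[k] q.2)) + beta f T} := by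
      ext q
      simp [LambdaStar, Eset]
    rw [heq]
    refine isClosed_iInter fun k => ?_
    have h1 : Continuous fun q : ((Circle1 →ᵇ ℝ) × Circle1) × Circle1 => T^[k] q.2 :=
      (hT.iterate k).comp continuous_snd
    have h2 : Continuous fun q : ((Circle1 →ᵇ ℝ) × Circle1) × Circle1 => q.1.1 :=
      continuous_fst.comp continuous_fst
    exact isClosed_eq ((hev.comp (h2.prodMk h1)).add (hf.comp h1))
      ((hev.comp (h2.prodMk (hT.comp h1))).add_const _)
  convert isClosedMap_fst_of_compactSpace _ hcl
  ext q
  simp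

open BoundedContinuousFunction in
/-- `K(f,T)` is the projection to the circle of the closed relation `x ∈ Λ_{f,T,g}` over the compact
set of normalised sub-actions; normalising does not change `Λ_{f,T,g}`. -/
lemma isCompact_Kset {f : Circle1 → ℝ} {T : Circle1 → Circle1} (hT : Continuous T)
    (hf : Continuous f) (L : NNReal) (hL : ∀ g ∈ Gset f T, LipschitzWith L g) :
    IsCompact (Kset f T) := by
  have hc := (((isCompact_normalised hT hf L).prod (isCompact_univ (X := Circle1))).inter_right
    (isClosed_graph hT hf)).image continuous_snd
  convert hc
  ext x
  simp only [Kset, mem_iUnion, mem_image, mem_inter_iff, mem_prod, mem_ofPred_eq, mem_univ,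
    and_true, Prod.exists, exists_eq_right]
  constructor
  · rintro ⟨g, hg, hx⟩
    have hgc : Continuous fun z => g z - g 0 := hg.2.1.1.sub continuous_const
    refine ⟨mkOfCompact ⟨fun z => g z - g 0, hgc⟩, ⟨sub_self (g 0), ?_, ⟨hgc, fun z => ?_⟩,
      fun z => ?_⟩, ?_⟩
    · refine LipschitzWith.of_dist_le_mul fun z z' => ?_
      change dist (g z - g 0) (g z' - g 0) ≤ _
      rw [dist_sub_right]
      exact (hL g hg).dist_le_mul z z'
    · change g z - g 0 + f z ≤ g (T z) - g 0 + beta f T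
      linarith [hg.2.1.2 z]
    · obtain ⟨y, hy, hy'⟩ := hg.2.2 z
      refine ⟨y, hy, ?_⟩
      change g y - g 0 + f y = g z - g 0 + beta f T
      linarith
    · change x ∈ Lambda f T fun z => g z - g 0
      rwa [lambda_sub_const]
  · rintro ⟨g, ⟨-, hgL, hgc⟩, hx⟩
    exact ⟨g, ⟨⟨L, hgL⟩, hgc⟩, hx⟩

/-- Proposition 2.1(ii): `K(f,T)` is a nonempty compact set with `T(K(f,T)) = K(f,T)`. -/
theorem Kset_compact_invariant (f : CrFun 1) (F : ExpMap 1) :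
    (Kset f.1 (cmap F.1)).Nonempty ∧ IsCompact (Kset f.1 (cmap F.1)) ∧
      cmap F.1 '' Kset f.1 (cmap F.1) = Kset f.1 (cmap F.1) := by
  obtain ⟨hT, hs, M, hM, θ, hθ, hθ1, hBC⟩ := backContr_cmap F.2
  obtain ⟨K, hK⟩ := f.exists_lipschitz
  have hf := hK.continuous
  refine ⟨?_, ?_, ?_⟩
  · obtain ⟨g, b, ⟨Kg, hg⟩, hsub, hcal⟩ := exists_calibrated hM hθ hθ1 hT hs hBC hK
    obtain rfl := beta_eq hT hf hg.continuous hsub hcal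
    have hgc : IsCalibrated f.1 (cmap F.1) g := ⟨⟨hg.continuous, hsub⟩, hcal⟩
    obtain ⟨x, hx⟩ := lambda_nonempty hT hf hgc
    exact ⟨x, mem_iUnion₂.2 ⟨g, ⟨⟨Kg, hg⟩, hgc⟩, hx⟩⟩
  · refine isCompact_Kset hT hf (K * M / (1 - θ)).toNNReal fun g hg => ?_
    obtain ⟨⟨Kg, hKg⟩, ⟨-, hsub⟩, hcal⟩ := hg
    refine LipschitzWith.of_le_add_mul _ fun x x' => ?_
    rw [Real.coe_toNNReal _ (div_nonneg (by positivity) (by linarith))]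
    exact calibrated_lipschitz hM hθ hθ1 hBC hK hKg hsub hcal x x'
  · rw [Kset, image_iUnion₂]
    exact iUnion₂_congr fun g hg => lambda_image hT hf hg.2.1.1
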